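/- arXiv:1003.3366 — 2 statements merged into one kernel-verified Lean document; each statement's English description precedes it below -/
import Mathlib

section
/- Let g ∈ C^∞(ℝ²) ∩ L^∞(ℝ²) and let u : [0,1] × [0,T] → ℝ be a smooth solution of the graph equation u_t = u_xx/(1 + u_x²) + g(x, u) √(1 + u_x²) with periodic-type boundary conditions. Let F(r) := r·arctan(r) − log √(1+r²). Then for every t ∈ (0,T), d/dt ∫₀¹ F(u_x(x,t)) dx = ∫₀¹ (−u_t² + g(x,u) u_t √(1 + u_x²)) dx ≤ (‖g‖_∞²/4) ∫₀¹ (1 + u_x²) dx. -/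
open Real MeasureTheory

noncomputable section

/-- partial derivative in the first (space) variable -/
def pdx (f : ℝ → ℝ → ℝ) : ℝ → ℝ → ℝ := fun x t => deriv (fun x' => f x' t) x

/-- partial derivative in the second (time) variable -/
def pdt (f : ℝ → ℝ → ℝ) : ℝ → ℝ → ℝ := fun x t => deriv (fun t' => f x t') t

/-- `u` is a smooth solution on `[0,1] × [0,T]` of the graph equation
`u_t = u_xx/(1+u_x²) + g(x,u)√(1+u_x²)` with periodic-type boundary conditions. -/
def IsGraphSol (g : ℝ → ℝ → ℝ) (T : ℝ) (u : ℝ → ℝ → ℝ) : Prop :=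
  ContDiff ℝ (⊤ : ℕ∞) (fun p : ℝ × ℝ => u p.1 p.2) ∧
  (∀ x ∈ Set.Icc (0:ℝ) 1, ∀ t ∈ Set.Icc 0 T,
    pdt u x t = pdx (pdx u) x t / (1 + (pdx u x t) ^ 2)
      + g x (u x t) * Real.sqrt (1 + (pdx u x t) ^ 2)) ∧
  (∀ t ∈ Set.Icc 0 T,
    u 0 t - u 0 0 = u 1 t - u 1 0 ∧ pdx u 0 t = pdx u 1 t)

/-!
The energy density `F` is the primitive of `arctan` vanishing at `0`, and `arctan' (u_x) u_xx` is
the curvature term `u_xx / (1 + u_x²)` of the equation. Hence differentiating `∫ F(u_x)` in time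
and integrating by parts in space gives `-∫ u_xx / (1 + u_x²) u_t`; the boundary terms cancel
because both `u_x` and `u_t` take equal values at the two endpoints. The equation rewrites the
curvature term as `u_t - g √(1 + u_x²)`, and completing the square in `u_t` bounds the result.
-/

section PartialDerivatives

variable {f : ℝ → ℝ → ℝ} {x t : ℝ} {m n : WithTop ℕ∞}

theorem hasDerivAt_pdx (hf : DifferentiableAt ℝ (fun p : ℝ × ℝ => f p.1 p.2) (x, t)) :
    HasDerivAt (fun x' => f x' t) (pdx f x t) x :=
  (hf.fun_comp' x (f := fun x' => (x', t)) (by fun_prop)).hasDerivAt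

theorem hasDerivAt_pdt (hf : DifferentiableAt ℝ (fun p : ℝ × ℝ => f p.1 p.2) (x, t)) :
    HasDerivAt (fun t' => f x t') (pdt f x t) t :=
  (hf.fun_comp' t (f := fun t' => (x, t')) (by fun_prop)).hasDerivAt

theorem pdx_eq_fderiv (hf : DifferentiableAt ℝ (fun p : ℝ × ℝ => f p.1 p.2) (x, t)) :
    pdx f x t = fderiv ℝ (fun p : ℝ × ℝ => f p.1 p.2) (x, t) (1, 0) :=
  (hf.hasFDerivAt.comp_hasDerivAt x (f := fun x' => (x', t))
    ((hasDerivAt_id x).prodMk (hasDerivAt_const x t))).deriv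

theorem pdt_eq_fderiv (hf : DifferentiableAt ℝ (fun p : ℝ × ℝ => f p.1 p.2) (x, t)) :
    pdt f x t = fderiv ℝ (fun p : ℝ × ℝ => f p.1 p.2) (x, t) (0, 1) :=
  (hf.hasFDerivAt.comp_hasDerivAt t (f := fun t' => (x, t'))
    ((hasDerivAt_const t x).prodMk (hasDerivAt_id t))).deriv

theorem contDiff_pdx (hf : ContDiff ℝ n (fun p : ℝ × ℝ => f p.1 p.2)) (hmn : m + 1 ≤ n) :
    ContDiff ℝ m (fun p : ℝ × ℝ => pdx f p.1 p.2) := by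
  have hdiff := hf.differentiable (n := n) (by rintro rfl; simp at hmn)
  simp only [fun p : ℝ × ℝ => pdx_eq_fderiv (hdiff (p.1, p.2))]
  exact (hf.fderiv_right hmn).clm_apply contDiff_const

theorem contDiff_pdt (hf : ContDiff ℝ n (fun p : ℝ × ℝ => f p.1 p.2)) (hmn : m + 1 ≤ n) :
    ContDiff ℝ m (fun p : ℝ × ℝ => pdt f p.1 p.2) := by
  have hdiff := hf.differentiable (n := n) (by rintro rfl; simp at hmn)
  simp only [fun p : ℝ × ℝ => pdt_eq_fderiv (hdiff (p.1, p.2))]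
  exact (hf.fderiv_right hmn).clm_apply contDiff_const

theorem pdt_pdx_comm (hf : ContDiff ℝ 2 (fun p : ℝ × ℝ => f p.1 p.2)) (x t : ℝ) :
    pdt (pdx f) x t = pdx (pdt f) x t := by
  let D : ℝ × ℝ → ℝ × ℝ →L[ℝ] ℝ := fderiv ℝ (fun p : ℝ × ℝ => f p.1 p.2)
  have hdiff : Differentiable ℝ (fun p : ℝ × ℝ => f p.1 p.2) := hf.differentiable (by norm_num)
  have hD : Differentiable ℝ D :=
    (hf.fderiv_right (m := 1) (by norm_num)).differentiable (by norm_num)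
  have hpdx : pdx f = fun x t => D (x, t) (1, 0) := by
    ext x t
    exact pdx_eq_fderiv (hdiff (x, t))
  have hpdt : pdt f = fun x t => D (x, t) (0, 1) := by
    ext x t
    exact pdt_eq_fderiv (hdiff (x, t))
  have hD_apply (v : ℝ × ℝ) : HasFDerivAt (fun p : ℝ × ℝ => D (p.1, p.2) v)
      ((fderiv ℝ D (x, t)).flip v) (x, t) :=
    (ContinuousLinearMap.apply ℝ ℝ v).hasFDerivAt.comp (x, t) (hD (x, t)).hasFDerivAt
  have hsymm : IsSymmSndFDerivAt ℝ (fun p : ℝ × ℝ => f p.1 p.2) (x, t) :=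
    hf.contDiffAt.isSymmSndFDerivAt (by simp)
  calc pdt (pdx f) x t = fderiv ℝ D (x, t) (0, 1) (1, 0) := by
        rw [hpdx, pdt_eq_fderiv (hD_apply _).differentiableAt, (hD_apply _).fderiv,
          ContinuousLinearMap.flip_apply]
    _ = fderiv ℝ D (x, t) (1, 0) (0, 1) := hsymm.eq _ _
    _ = pdx (pdt f) x t := by
        rw [hpdt, pdx_eq_fderiv (hD_apply _).differentiableAt, (hD_apply _).fderiv,
          ContinuousLinearMap.flip_apply]

end PartialDerivatives

theorem hasDerivAt_intervalIntegral_of_continuous_deriv {E : Type*} [NormedAddCommGroup E]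
    [NormedSpace ℝ E] {f f' : ℝ → ℝ → E} (a b t : ℝ) (hf : ∀ s, Continuous fun x => f x s)
    (hf' : Continuous fun p : ℝ × ℝ => f' p.1 p.2)
    (hderiv : ∀ x s, HasDerivAt (fun s' => f x s') (f' x s) s) :
    HasDerivAt (fun s => ∫ x in a..b, f x s) (∫ x in a..b, f' x t) t := by
  obtain ⟨C, hC⟩ := (isCompact_uIcc (a := a) (b := b)).prod (isCompact_closedBall t 1)
    |>.exists_bound_of_continuousOn hf'.continuousOn
  have hf't : Continuous fun x => f' x t := hf'.comp (by fun_prop : Continuous fun x => (x, t))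
  exact (intervalIntegral.hasDerivAt_integral_of_dominated_loc_of_deriv_le
    (F := fun s x => f x s) (F' := fun s x => f' x s) (bound := fun _ => C)
    (Metric.closedBall_mem_nhds t one_pos)
    (.of_forall fun s => (hf s).aestronglyMeasurable) ((hf t).intervalIntegrable a b)
    hf't.aestronglyMeasurable
    (.of_forall fun x hx s hs => hC (x, s) ⟨Set.uIoc_subset_uIcc hx, hs⟩)
    intervalIntegrable_const (.of_forall fun x _ s _ => hderiv x s)).2

section Energy

variable {u : ℝ → ℝ → ℝ} {Φ φ φ' : ℝ → ℝ}

theorem hasDerivAt_integral_comp_pdx (hu : ContDiff ℝ 2 (fun p : ℝ × ℝ => u p.1 p.2))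
    (hΦ : ∀ r, HasDerivAt Φ (φ r) r) (hφ : Continuous φ) (a b t : ℝ) :
    HasDerivAt (fun s => ∫ x in a..b, Φ (pdx u x s))
      (∫ x in a..b, φ (pdx u x t) * pdt (pdx u) x t) t := by
  have hux : ContDiff ℝ 1 (fun p : ℝ × ℝ => pdx u p.1 p.2) := contDiff_pdx hu (by norm_num)
  have huxt : Continuous (fun p : ℝ × ℝ => pdt (pdx u) p.1 p.2) :=
    (contDiff_pdt (m := 0) hux (by norm_num)).continuous
  have hΦ_cont : Continuous Φ := continuous_iff_continuousAt.2 fun r => (hΦ r).continuousAt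
  have hux_slice (s : ℝ) : Continuous fun x => pdx u x s :=
    hux.continuous.comp (by fun_prop : Continuous fun x => (x, s))
  exact hasDerivAt_intervalIntegral_of_continuous_deriv a b t
    (fun s => hΦ_cont.comp (hux_slice s)) ((hφ.comp hux.continuous).mul huxt)
    fun x s => (hΦ _).comp s (hasDerivAt_pdt (hux.differentiable (by norm_num) (x, s)))

theorem integral_comp_pdx_mul_pdt_pdx (hu : ContDiff ℝ 2 (fun p : ℝ × ℝ => u p.1 p.2))
    (hφ : ∀ r, HasDerivAt φ (φ' r) r) (hφ' : Continuous φ') (a b t : ℝ) :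
    ∫ x in a..b, φ (pdx u x t) * pdt (pdx u) x t =
      φ (pdx u b t) * pdt u b t - φ (pdx u a t) * pdt u a t -
        ∫ x in a..b, φ' (pdx u x t) * pdx (pdx u) x t * pdt u x t := by
  have hux : ContDiff ℝ 1 (fun p : ℝ × ℝ => pdx u p.1 p.2) := contDiff_pdx hu (by norm_num)
  have hut : ContDiff ℝ 1 (fun p : ℝ × ℝ => pdt u p.1 p.2) := contDiff_pdt hu (by norm_num)
  have hslice : Continuous fun x : ℝ => (x, t) := by fun_prop
  have huxx : Continuous fun x => pdx (pdx u) x t :=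
    (contDiff_pdx (m := 0) hux (by norm_num)).continuous.comp hslice
  have hutx : Continuous fun x => pdx (pdt u) x t :=
    (contDiff_pdx (m := 0) hut (by norm_num)).continuous.comp hslice
  simp only [pdt_pdx_comm hu]
  exact intervalIntegral.integral_mul_deriv_eq_deriv_mul
    (fun x _ => (hφ _).comp x (hasDerivAt_pdx (hux.differentiable (by norm_num) (x, t))))
    (fun x _ => hasDerivAt_pdx (hut.differentiable (by norm_num) (x, t)))
    (((hφ'.comp (hux.continuous.comp hslice)).mul huxx).intervalIntegrable a b)
    (hutx.intervalIntegrable a b)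

end Energy

/-- The energy density `F` of the graph equation, the primitive of `arctan` vanishing at `0`. -/
def arctanPrimitive (r : ℝ) : ℝ := r * arctan r - log √(1 + r ^ 2)

theorem hasDerivAt_arctanPrimitive (r : ℝ) : HasDerivAt arctanPrimitive (arctan r) r := by
  have hpos : 0 < 1 + r ^ 2 := by positivity
  have hmul := (hasDerivAt_id r).mul (hasDerivAt_arctan r)
  have hlog := (((hasDerivAt_pow 2 r).const_add 1).sqrt hpos.ne').log (sqrt_ne_zero'.2 hpos)
  refine (hmul.sub hlog).congr_deriv ?_
  have hsq : √(1 + r ^ 2) ^ 2 = 1 + r ^ 2 := sq_sqrt hpos.le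
  simp only [id]
  field_simp
  rw [hsq]
  push_cast
  ring

theorem neg_sq_add_mul_le {c M : ℝ} (v s : ℝ) (hc : |c| ≤ M) :
    -v ^ 2 + c * v * s ≤ M ^ 2 / 4 * s ^ 2 := by
  have hcM : c ^ 2 ≤ M ^ 2 := sq_le_sq' (neg_le_of_abs_le hc) (le_of_abs_le hc)
  calc -v ^ 2 + c * v * s = c ^ 2 / 4 * s ^ 2 - (v - c * s / 2) ^ 2 := by ring
    _ ≤ c ^ 2 / 4 * s ^ 2 := sub_le_self _ (sq_nonneg _)
    _ ≤ M ^ 2 / 4 * s ^ 2 := by gcongr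

theorem neg_sq_add_mul_eq {v w p c s : ℝ} (h : v = w / p + c * s) :
    -v ^ 2 + c * v * s = -(p⁻¹ * w * v) := by
  linear_combination -v * h

theorem continuous_inv_one_add_sq : Continuous fun r : ℝ => (1 + r ^ 2)⁻¹ :=
  Continuous.inv₀ (by fun_prop) fun r => by positivity

theorem continuous_curvature_mul_pdt {u : ℝ → ℝ → ℝ}
    (hu : ContDiff ℝ 2 (fun p : ℝ × ℝ => u p.1 p.2)) (t : ℝ) :
    Continuous fun x => (1 + pdx u x t ^ 2)⁻¹ * pdx (pdx u) x t * pdt u x t := by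
  have hslice : Continuous fun x : ℝ => (x, t) := by fun_prop
  have hux : ContDiff ℝ 1 (fun p : ℝ × ℝ => pdx u p.1 p.2) := contDiff_pdx hu (by norm_num)
  have huxx : Continuous fun x => pdx (pdx u) x t :=
    (contDiff_pdx (m := 0) hux (by norm_num)).continuous.comp hslice
  have hut : Continuous fun x => pdt u x t :=
    (contDiff_pdt (m := 1) hu (by norm_num)).continuous.comp hslice
  exact ((continuous_inv_one_add_sq.comp (hux.continuous.comp hslice)).mul huxx).mul hut

theorem IsGraphSol.pdt_zero_eq_pdt_one {g u : ℝ → ℝ → ℝ} {T t : ℝ} (hu : IsGraphSol g T u)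
    (ht : t ∈ Set.Ioo 0 T) : pdt u 0 t = pdt u 1 t := by
  have hbc : (fun s => u 0 s - u 0 0) =ᶠ[nhds t] fun s => u 1 s - u 1 0 := by
    filter_upwards [Icc_mem_nhds ht.1 ht.2] with s hs using (hu.2.2 s hs).1
  simpa only [deriv_sub_const, pdt] using hbc.deriv_eq

theorem statement12_general {g u : ℝ → ℝ → ℝ} {a b t M : ℝ} (hab : a ≤ b)
    (hu : ContDiff ℝ 2 (fun p : ℝ × ℝ => u p.1 p.2))
    (hpde : ∀ x ∈ Set.Icc a b, pdt u x t = pdx (pdx u) x t / (1 + pdx u x t ^ 2)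
      + g x (u x t) * √(1 + pdx u x t ^ 2))
    (hut : pdt u a t = pdt u b t) (hux : pdx u a t = pdx u b t)
    (hM : ∀ x ∈ Set.Icc a b, |g x (u x t)| ≤ M) :
    HasDerivAt (fun s => ∫ x in a..b, arctanPrimitive (pdx u x s))
        (∫ x in a..b, (-pdt u x t ^ 2 + g x (u x t) * pdt u x t * √(1 + pdx u x t ^ 2))) t ∧
      ∫ x in a..b, (-pdt u x t ^ 2 + g x (u x t) * pdt u x t * √(1 + pdx u x t ^ 2)) ≤
        M ^ 2 / 4 * ∫ x in a..b, (1 + pdx u x t ^ 2) := by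
  have hux_cont : Continuous fun x => pdx u x t :=
    (contDiff_pdx (m := 1) hu (by norm_num)).continuous.comp
      (by fun_prop : Continuous fun x => (x, t))
  have hintegrand : Set.EqOn
      (fun x => -pdt u x t ^ 2 + g x (u x t) * pdt u x t * √(1 + pdx u x t ^ 2))
      (fun x => -((1 + pdx u x t ^ 2)⁻¹ * pdx (pdx u) x t * pdt u x t)) (Set.uIcc a b) := by
    intro x hx
    rw [Set.uIcc_of_le hab] at hx
    exact neg_sq_add_mul_eq (hpde x hx)
  constructor
  · have henergy := hasDerivAt_integral_comp_pdx hu hasDerivAt_arctanPrimitive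
      continuous_arctan a b t
    rwa [integral_comp_pdx_mul_pdt_pdx hu hasDerivAt_arctan'
      continuous_inv_one_add_sq, hux, hut, sub_self, zero_sub, ← intervalIntegral.integral_neg,
      ← intervalIntegral.integral_congr hintegrand] at henergy
  · rw [← intervalIntegral.integral_const_mul]
    refine intervalIntegral.integral_mono_on hab
      ((continuous_curvature_mul_pdt hu t).neg.continuousOn.congr hintegrand).intervalIntegrable
      (Continuous.intervalIntegrable (by fun_prop) a b) fun x hx => ?_
    have hyoung := neg_sq_add_mul_le (pdt u x t) √(1 + pdx u x t ^ 2) (hM x hx)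
    rwa [sq_sqrt (by positivity)] at hyoung

theorem statement12 (g : ℝ → ℝ → ℝ)
    (hg : ContDiff ℝ (⊤ : ℕ∞) (fun p : ℝ × ℝ => g p.1 p.2))
    (M : ℝ) (hM : ∀ a b, |g a b| ≤ M)
    (T : ℝ) (hT : 0 < T) (u : ℝ → ℝ → ℝ) (hu : IsGraphSol g T u) :
    ∀ t ∈ Set.Ioo 0 T,
      HasDerivAt (fun t' => ∫ x in (0:ℝ)..1,
          (pdx u x t' * Real.arctan (pdx u x t')
            - Real.log (Real.sqrt (1 + (pdx u x t') ^ 2))))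
        (∫ x in (0:ℝ)..1,
          (-(pdt u x t) ^ 2
            + g x (u x t) * pdt u x t * Real.sqrt (1 + (pdx u x t) ^ 2))) t ∧
      (∫ x in (0:ℝ)..1,
          (-(pdt u x t) ^ 2
            + g x (u x t) * pdt u x t * Real.sqrt (1 + (pdx u x t) ^ 2)))
        ≤ M ^ 2 / 4 * ∫ x in (0:ℝ)..1, (1 + (pdx u x t) ^ 2) :=
  fun t ht => statement12_general zero_le_one (hu.1.of_le (by norm_cast))
    (fun x hx => hu.2.1 x hx t (Set.Ioo_subset_Icc_self ht)) (hu.pdt_zero_eq_pdt_one ht)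
    (hu.2.2 t (Set.Ioo_subset_Icc_self ht)).2 fun x _ => hM x (u x t)
end
end

section
/- Let T, C, K > 0, let u₀ : ℝ → ℝ be smooth and 1-periodic, let g_n ∈ C^∞(ℝ²) with ‖g_n‖_∞ ≤ C for every n, and for each n let u_n : [0,1] × [0,T] → ℝ be a smooth solution of the graph equation u_t = u_xx/(1 + u_x²) + g_n(x, u) √(1 + u_x²) with periodic-type boundary conditions, u_n(·,0) = u₀, and ‖u_n(·,t)‖_{H¹([0,1])} ≤ K for all t ∈ [0,T]. Then there exist a subsequence (u_{n_k}) and a continuous function u : [0,1] × [0,T] → ℝ, satisfying |u(x,t) − u(y,s)| ≤ C'(|x−y|^{1/2} + |t−s|^{1/4}) for some constant C' and all x, y, t, s, such that u_{n_k} converges to u uniformly on [0,1] × [0,T]. -/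
open Real MeasureTheory

noncomputable section

/-!
The convex primitive `Φ` of `arctan` is a Lyapunov function: multiplying the equation by `u_t` and
integrating by parts, the periodic boundary conditions give
`∫ u_xx / (1 + u_x²) * u_t = -d/dt ∫ Φ(u_x)`, so that bounded forcing bounds `u_t` in `L²` of
space-time. Hence `‖u(·,t) - u(·,s)‖_{L²}² = O(|t - s|)`. Interpolating with the `L²` bound on the
slopes turns this into Hölder continuity of exponent `1/4` in time, while Cauchy–Schwarz alone
gives exponent `1/2` in space. All constants depend only on `T`, `C` and `K`, so Arzelà–Ascoli
applies.
-/

section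

open Function Set Filter Topology

section PartialDerivatives

variable {u : ℝ → ℝ → ℝ}

lemma hasDerivAt_pdx_s16 {x t : ℝ} (hu : DifferentiableAt ℝ (uncurry u) (x, t)) :
    HasDerivAt (fun y => u y t) (pdx u x t) x :=
  (hu.comp (f := fun y => (y, t)) x (by fun_prop)).hasDerivAt

lemma hasDerivAt_pdt_s16 {x t : ℝ} (hu : DifferentiableAt ℝ (uncurry u) (x, t)) :
    HasDerivAt (fun τ => u x τ) (pdt u x t) t :=
  (hu.comp (f := fun τ => (x, τ)) t (by fun_prop)).hasDerivAt

lemma pdx_eq_fderiv_s16 {x t : ℝ} (hu : DifferentiableAt ℝ (uncurry u) (x, t)) :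
    pdx u x t = fderiv ℝ (uncurry u) (x, t) (1, 0) :=
  (hu.hasFDerivAt.comp_hasDerivAt (f := fun y => (y, t)) x
    ((hasDerivAt_id x).prodMk (hasDerivAt_const x t))).deriv

lemma pdt_eq_fderiv_s16 {x t : ℝ} (hu : DifferentiableAt ℝ (uncurry u) (x, t)) :
    pdt u x t = fderiv ℝ (uncurry u) (x, t) (0, 1) :=
  (hu.hasFDerivAt.comp_hasDerivAt (f := fun τ => (x, τ)) t
    ((hasDerivAt_const t x).prodMk (hasDerivAt_id t))).deriv

lemma uncurry_pdx (hu : Differentiable ℝ (uncurry u)) :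
    uncurry (pdx u) = fun p => fderiv ℝ (uncurry u) p (1, 0) :=
  funext fun p => pdx_eq_fderiv_s16 (hu p)

lemma uncurry_pdt (hu : Differentiable ℝ (uncurry u)) :
    uncurry (pdt u) = fun p => fderiv ℝ (uncurry u) p (0, 1) :=
  funext fun p => pdt_eq_fderiv_s16 (hu p)

lemma contDiff_pdx_s16 {n : WithTop ℕ∞} (hu : ContDiff ℝ (n + 1) (uncurry u)) :
    ContDiff ℝ n (uncurry (pdx u)) := by
  rw [uncurry_pdx (hu.differentiable (by simp))]
  exact (hu.fderiv_right le_rfl).clm_apply contDiff_const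

lemma contDiff_pdt_s16 {n : WithTop ℕ∞} (hu : ContDiff ℝ (n + 1) (uncurry u)) :
    ContDiff ℝ n (uncurry (pdt u)) := by
  rw [uncurry_pdt (hu.differentiable (by simp))]
  exact (hu.fderiv_right le_rfl).clm_apply contDiff_const

lemma pdx_pdt_comm (hu : ContDiff ℝ 2 (uncurry u)) (x t : ℝ) :
    pdx (pdt u) x t = pdt (pdx u) x t := by
  have hu₁ : Differentiable ℝ (uncurry u) := hu.differentiable two_ne_zero
  have hu₂ : DifferentiableAt ℝ (fderiv ℝ (uncurry u)) (x, t) :=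
    (hu.fderiv_right (m := 1) le_rfl).differentiable one_ne_zero _
  have hsymm : IsSymmSndFDerivAt ℝ (uncurry u) (x, t) :=
    hu.contDiffAt.isSymmSndFDerivAt (by simp)
  rw [pdx_eq_fderiv_s16 ((contDiff_pdt_s16 hu).differentiable one_ne_zero _),
    pdt_eq_fderiv_s16 ((contDiff_pdx_s16 hu).differentiable one_ne_zero _),
    uncurry_pdx hu₁, uncurry_pdt hu₁,
    fderiv_clm_apply hu₂ (differentiableAt_const _),
    fderiv_clm_apply hu₂ (differentiableAt_const _)]
  simpa using hsymm (1, 0) (0, 1)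

end PartialDerivatives

lemma sq_integral_mul_le {α : Type*} [MeasurableSpace α] {μ : Measure α} {f g : α → ℝ}
    (hf : Integrable (fun x => f x ^ 2) μ) (hg : Integrable (fun x => g x ^ 2) μ)
    (hfg : Integrable (fun x => f x * g x) μ) :
    (∫ x, f x * g x ∂μ) ^ 2 ≤ (∫ x, f x ^ 2 ∂μ) * ∫ x, g x ^ 2 ∂μ := by
  have hquad (c : ℝ) : 0 ≤ (∫ x, f x ^ 2 ∂μ) * (c * c) + 2 * (∫ x, f x * g x ∂μ) * c +
      ∫ x, g x ^ 2 ∂μ :=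
    calc 0 ≤ ∫ x, (c * f x + g x) ^ 2 ∂μ := integral_nonneg fun x => sq_nonneg _
      _ = ∫ x, (c * c * f x ^ 2 + 2 * c * (f x * g x) + g x ^ 2) ∂μ := by
        congr 1 with x; ring
      _ = _ := by
        rw [integral_add (by exact (hf.const_mul _).add (hfg.const_mul _)) hg,
          integral_add (hf.const_mul _) (hfg.const_mul _), integral_const_mul,
          integral_const_mul]
        ring
  have := discrim_le_zero hquad
  rw [discrim] at this
  linarith

section Interval

variable {f g : ℝ → ℝ} {a b : ℝ}

lemma sq_intervalIntegral_mul_le (hf : Continuous f) (hg : Continuous g) (hab : a ≤ b) :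
    (∫ x in a..b, f x * g x) ^ 2 ≤ (∫ x in a..b, f x ^ 2) * ∫ x in a..b, g x ^ 2 := by
  simp only [intervalIntegral.integral_of_le hab]
  exact sq_integral_mul_le (hf.pow 2).integrableOn_Ioc (hg.pow 2).integrableOn_Ioc
    (hf.mul hg).integrableOn_Ioc

lemma integral_sub_sq_le (hf : Continuous f) (hg : Continuous g) (hab : a ≤ b) :
    ∫ x in a..b, (f x - g x) ^ 2 ≤
      2 * ((∫ x in a..b, f x ^ 2) + ∫ x in a..b, g x ^ 2) := by
  have hf2 : IntervalIntegrable (fun x => f x ^ 2) volume a b := (hf.pow 2).intervalIntegrable a b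
  have hg2 : IntervalIntegrable (fun x => g x ^ 2) volume a b := (hg.pow 2).intervalIntegrable a b
  rw [← intervalIntegral.integral_add hf2 hg2, ← intervalIntegral.integral_const_mul]
  refine intervalIntegral.integral_mono_on hab (((hf.sub hg).pow 2).intervalIntegrable _ _)
    ((hf2.add hg2).const_mul 2) fun x _ => ?_
  linarith [sq_nonneg (f x + g x)]

lemma sq_sub_le_integral_deriv_sq {f' : ℝ → ℝ} (hf : ∀ x, HasDerivAt f (f' x) x)
    (hf' : Continuous f') (hab : a ≤ b) :
    (f b - f a) ^ 2 ≤ (b - a) * ∫ x in a..b, f' x ^ 2 := by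
  have h := sq_intervalIntegral_mul_le (continuous_const (y := (1 : ℝ))) hf' hab
  simpa [intervalIntegral.integral_eq_sub_of_hasDerivAt (fun x _ => hf x)
    (hf'.intervalIntegrable a b)] using h

lemma abs_intervalIntegral_le_integral_abs (hf : Continuous f) {x y : ℝ} (hx : x ∈ Icc a b)
    (hy : y ∈ Icc a b) : |∫ z in y..x, f z| ≤ ∫ z in a..b, |f z| := by
  have hab : a ≤ b := hx.1.trans hx.2
  calc |∫ z in y..x, f z| ≤ |(∫ z in y..x, |f z|)| := by
        simpa only [Real.norm_eq_abs] using
          intervalIntegral.norm_integral_le_abs_integral_norm (f := f) (μ := volume)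
    _ ≤ |(∫ z in a..b, |f z|)| := by
        refine intervalIntegral.abs_integral_mono_interval ?_
          (Eventually.of_forall fun z => abs_nonneg _) (hf.abs.intervalIntegrable _ _)
        rw [uIoc_of_le hab]
        exact Ioc_subset_Ioc (le_min hy.1 hx.1) (max_le hy.2 hx.2)
    _ = ∫ z in a..b, |f z| :=
        abs_of_nonneg (intervalIntegral.integral_nonneg hab fun z _ => abs_nonneg _)

lemma sq_le_integral_sq_add_sqrt {f' : ℝ → ℝ} (hf : ∀ x, HasDerivAt f (f' x) x)
    (hf' : Continuous f') (hab : a < b) {x : ℝ} (hx : x ∈ Icc a b) :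
    f x ^ 2 ≤ (b - a)⁻¹ * (∫ y in a..b, f y ^ 2) +
      2 * √((∫ y in a..b, f y ^ 2) * ∫ y in a..b, f' y ^ 2) := by
  have hfc : Continuous f := continuous_iff_continuousAt.2 fun x => (hf x).continuousAt
  set R := √((∫ y in a..b, f y ^ 2) * ∫ y in a..b, f' y ^ 2)
  have hR : ∫ z in a..b, |f z * f' z| ≤ R := by
    have h := sq_intervalIntegral_mul_le hfc.abs hf'.abs hab.le
    simp only [← abs_mul, sq_abs] at h
    exact Real.le_sqrt_of_sq_le h
  -- Average `f x ^ 2 = f y ^ 2 + 2 * ∫ z in y..x, f z * f' z` over `y`.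
  have hpt : ∀ y ∈ Icc a b, f x ^ 2 - 2 * R ≤ f y ^ 2 := by
    intro y hy
    have hFTC : ∫ z in y..x, 2 * (f z * f' z) = f x ^ 2 - f y ^ 2 :=
      intervalIntegral.integral_eq_sub_of_hasDerivAt (f := fun z => f z ^ 2)
        (fun z _ => by simpa [mul_assoc] using! (hf z).pow 2)
        (Continuous.intervalIntegrable (by fun_prop) _ _)
    rw [intervalIntegral.integral_const_mul] at hFTC
    have habs := abs_intervalIntegral_le_integral_abs (f := fun z => f z * f' z)
      (hfc.mul hf') hx hy
    linarith [le_of_abs_le habs]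
  have hmean : (b - a) * (f x ^ 2 - 2 * R) ≤ ∫ y in a..b, f y ^ 2 := by
    simpa only [intervalIntegral.integral_const, smul_eq_mul] using
      intervalIntegral.integral_mono_on (f := fun _ => f x ^ 2 - 2 * R) (g := fun y => f y ^ 2)
        (μ := volume) hab.le intervalIntegrable_const ((hfc.pow 2).intervalIntegrable _ _) hpt
  linarith [(le_inv_mul_iff₀ (sub_pos.2 hab)).2 hmean]

lemma integral_sq_le_integral_sq_add_sq (hf : Continuous f) (hg : Continuous g)
    (hab : a ≤ b) :
    ∫ x in a..b, f x ^ 2 ≤ ∫ x in a..b, (f x ^ 2 + g x ^ 2) :=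
  intervalIntegral.integral_mono_on (f := fun x => f x ^ 2) (g := fun x => f x ^ 2 + g x ^ 2) hab
    ((hf.pow 2).intervalIntegrable _ _) (((hf.pow 2).add (hg.pow 2)).intervalIntegrable _ _)
    fun x _ => le_add_of_nonneg_right (sq_nonneg (g x))

lemma sq_le_of_integral_sq_add_deriv_sq_le {f' : ℝ → ℝ} {E : ℝ}
    (hf : ∀ x, HasDerivAt f (f' x) x) (hf' : Continuous f') (hab : a < b)
    (hE : ∫ y in a..b, (f y ^ 2 + f' y ^ 2) ≤ E) {x : ℝ} (hx : x ∈ Icc a b) :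
    f x ^ 2 ≤ ((b - a)⁻¹ + 2) * E := by
  have hfc : Continuous f := continuous_iff_continuousAt.2 fun x => (hf x).continuousAt
  have hfE : ∫ y in a..b, f y ^ 2 ≤ E := (integral_sq_le_integral_sq_add_sq hfc hf' hab.le).trans hE
  have hf'E : ∫ y in a..b, f' y ^ 2 ≤ E :=
    (integral_sq_le_integral_sq_add_sq hf' hfc hab.le).trans (by simpa only [add_comm] using hE)
  have hnonneg (h : ℝ → ℝ) : 0 ≤ ∫ y in a..b, h y ^ 2 :=
    intervalIntegral.integral_nonneg hab.le fun y _ => sq_nonneg _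
  have hsqrt : √((∫ y in a..b, f y ^ 2) * ∫ y in a..b, f' y ^ 2) ≤ E :=
    sqrt_le_iff.2 ⟨(hnonneg f).trans hfE, by
      rw [sq]; exact mul_le_mul hfE hf'E (hnonneg f') ((hnonneg f).trans hfE)⟩
  have hmean := mul_le_mul_of_nonneg_left hfE (inv_nonneg.2 (sub_nonneg.2 hab.le))
  linarith [sq_le_integral_sq_add_sqrt hf hf' hab hx]

end Interval

section Rectangle

variable {f : ℝ → ℝ → ℝ} {a b c d : ℝ}

lemma integrableOn_Icc_prod_Icc (hf : Continuous (uncurry f)) :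
    IntegrableOn (fun p : ℝ × ℝ => f p.1 p.2) (Icc a b ×ˢ Icc c d) :=
  hf.continuousOn.integrableOn_compact (isCompact_Icc.prod isCompact_Icc)

lemma setIntegral_Icc_prod_Icc (hf : Continuous (uncurry f)) (hab : a ≤ b) (hcd : c ≤ d) :
    ∫ p in Icc a b ×ˢ Icc c d, f p.1 p.2 = ∫ x in a..b, ∫ t in c..d, f x t := by
  simp only [intervalIntegral.integral_of_le, hab, hcd, ← integral_Icc_eq_integral_Ioc]
  exact setIntegral_prod _ (integrableOn_Icc_prod_Icc hf)

lemma setIntegral_Icc_prod_Icc_symm (hf : Continuous (uncurry f)) (hab : a ≤ b) (hcd : c ≤ d) :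
    ∫ p in Icc a b ×ˢ Icc c d, f p.1 p.2 = ∫ t in c..d, ∫ x in a..b, f x t := by
  rw [setIntegral_Icc_prod_Icc hf hab hcd]
  refine intervalIntegral_intervalIntegral_swap ?_
  rw [uIoc_of_le hab, uIoc_of_le hcd]
  exact (integrableOn_Icc_prod_Icc hf).mono_set (prod_mono Ioc_subset_Icc_self Ioc_subset_Icc_self)

lemma setIntegral_Icc_prod_Icc_le {M : ℝ} (hf : Continuous (uncurry f)) (hab : a ≤ b) (hcd : c ≤ d)
    (hM : ∀ t ∈ Icc c d, ∫ x in a..b, f x t ≤ M) :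
    ∫ p in Icc a b ×ˢ Icc c d, f p.1 p.2 ≤ (d - c) * M := by
  have hslice : Continuous fun t => ∫ x in a..b, f x t :=
    intervalIntegral.continuous_parametric_intervalIntegral_of_continuous' (f := fun t x => f x t)
      (hf.comp continuous_swap) a b
  calc ∫ p in Icc a b ×ˢ Icc c d, f p.1 p.2 = ∫ t in c..d, ∫ x in a..b, f x t :=
        setIntegral_Icc_prod_Icc_symm hf hab hcd
    _ ≤ ∫ _ in c..d, M :=
        intervalIntegral.integral_mono_on hcd (hslice.intervalIntegrable _ _)
          intervalIntegrable_const hM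
    _ = (d - c) * M := by simp

end Rectangle

/-- The convex primitive of `arctan` vanishing at `0`. When the boundary terms cancel, its integral
over the slopes `u_x` of an evolving graph decreases at the rate `∫ u_xx / (1 + u_x²) * u_t`. -/
def slopeEnergy (p : ℝ) : ℝ := ∫ q in (0 : ℝ)..p, arctan q

lemma hasDerivAt_slopeEnergy (p : ℝ) : HasDerivAt slopeEnergy (arctan p) p :=
  (continuous_arctan.integral_hasStrictDerivAt 0 p).hasDerivAt

lemma slopeEnergy_neg (p : ℝ) : slopeEnergy (-p) = slopeEnergy p := by
  have h := intervalIntegral.integral_comp_neg (a := 0) (b := p) arctan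
  simp only [arctan_neg, intervalIntegral.integral_neg, neg_zero] at h
  rw [slopeEnergy, slopeEnergy, intervalIntegral.integral_symm, ← h, neg_neg]

lemma slopeEnergy_abs (p : ℝ) : slopeEnergy |p| = slopeEnergy p := by
  rcases abs_choice p with h | h <;> simp only [h, slopeEnergy_neg]

lemma slopeEnergy_nonneg (p : ℝ) : 0 ≤ slopeEnergy p := by
  rw [← slopeEnergy_abs]
  exact intervalIntegral.integral_nonneg (abs_nonneg p) fun q hq => arctan_nonneg.2 hq.1

lemma arctan_le_self_of_nonneg {q : ℝ} (hq : 0 ≤ q) : arctan q ≤ q := by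
  simpa using le_tan (arctan_nonneg.2 hq) (arctan_lt_pi_div_two q)

lemma slopeEnergy_le (p : ℝ) : slopeEnergy p ≤ p ^ 2 / 2 := by
  rw [← slopeEnergy_abs]
  calc slopeEnergy |p| ≤ ∫ q in (0 : ℝ)..|p|, q :=
        intervalIntegral.integral_mono_on (abs_nonneg p)
          (continuous_arctan.intervalIntegrable _ _) (continuous_id.intervalIntegrable _ _)
          fun q hq => arctan_le_self_of_nonneg hq.1
    _ = p ^ 2 / 2 := by simp

lemma continuous_slopeEnergy : Continuous slopeEnergy :=
  continuous_iff_continuousAt.2 fun p => (hasDerivAt_slopeEnergy p).continuousAt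

lemma integral_slopeEnergy_le {f : ℝ → ℝ} {a b : ℝ} (hf : Continuous f) (hab : a ≤ b) :
    2 * ∫ x in a..b, slopeEnergy (f x) ≤ ∫ x in a..b, f x ^ 2 := by
  rw [← intervalIntegral.integral_const_mul]
  exact intervalIntegral.integral_mono_on (g := fun x => f x ^ 2) hab
    (((continuous_slopeEnergy.comp hf).const_mul 2).intervalIntegrable _ _)
    ((hf.pow 2).intervalIntegrable _ _) fun x _ => by linarith [slopeEnergy_le (f x)]

section Dissipation

variable {u : ℝ → ℝ → ℝ} {Ψ ψ ψ' : ℝ → ℝ}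

lemma hasDerivAt_comp_pdx_mul_pdt (hu : ContDiff ℝ 2 (uncurry u))
    (hψ : ∀ p, HasDerivAt ψ (ψ' p) p) (x t : ℝ) :
    HasDerivAt (fun y => ψ (pdx u y t) * pdt u y t)
      (ψ' (pdx u x t) * pdx (pdx u) x t * pdt u x t + ψ (pdx u x t) * pdt (pdx u) x t) x := by
  have hux := hasDerivAt_pdx_s16 ((contDiff_pdx_s16 (n := 1) hu).differentiable one_ne_zero (x, t))
  have hut := hasDerivAt_pdx_s16 ((contDiff_pdt_s16 (n := 1) hu).differentiable one_ne_zero (x, t))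
  rw [pdx_pdt_comm hu] at hut
  exact ((hψ _).comp x hux).mul hut

lemma setIntegral_deriv_comp_pdx_mul_pdt (hu : ContDiff ℝ 2 (uncurry u))
    (hΨ : ∀ p, HasDerivAt Ψ (ψ p) p) (hψ : ∀ p, HasDerivAt ψ (ψ' p) p)
    (hψ' : Continuous ψ') {a b s t : ℝ} (hab : a ≤ b) (hst : s ≤ t)
    (hx : ∀ τ ∈ Icc s t, pdx u a τ = pdx u b τ) (ht : ∀ τ ∈ Icc s t, pdt u a τ = pdt u b τ) :
    ∫ p in Icc a b ×ˢ Icc s t, ψ' (pdx u p.1 p.2) * pdx (pdx u) p.1 p.2 * pdt u p.1 p.2 =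
      (∫ x in a..b, Ψ (pdx u x s)) - ∫ x in a..b, Ψ (pdx u x t) := by
  -- The integrand is `(ψ (u_x) u_t)_x - (Ψ (u_x))_t`, and the boundary conditions cancel the flux.
  have hux : ContDiff ℝ 1 (uncurry (pdx u)) := contDiff_pdx_s16 hu
  have hut : ContDiff ℝ 1 (uncurry (pdt u)) := contDiff_pdt_s16 hu
  have hΨc : Continuous Ψ := continuous_iff_continuousAt.2 fun p => (hΨ p).continuousAt
  have hψc : Continuous ψ := continuous_iff_continuousAt.2 fun p => (hψ p).continuousAt
  set A : ℝ → ℝ → ℝ := fun x τ => ψ' (pdx u x τ) * pdx (pdx u) x τ * pdt u x τ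
  set B : ℝ → ℝ → ℝ := fun x τ => ψ (pdx u x τ) * pdt (pdx u) x τ
  have hA : Continuous (uncurry A) :=
    ((hψ'.comp hux.continuous).mul (contDiff_pdx_s16 (n := 0) hux).continuous).mul hut.continuous
  have hB : Continuous (uncurry B) :=
    (hψc.comp hux.continuous).mul (contDiff_pdt_s16 (n := 0) hux).continuous
  have hAB : Continuous (uncurry fun x τ => A x τ + B x τ) := hA.add hB
  have hflux : ∀ τ ∈ Icc s t, ∫ x in a..b, (A x τ + B x τ) = 0 := by
    intro τ hτ
    rw [intervalIntegral.integral_eq_sub_of_hasDerivAt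
      (fun x _ => hasDerivAt_comp_pdx_mul_pdt hu hψ x τ)
      ((hAB.uncurry_right τ).intervalIntegrable _ _), hx τ hτ, ht τ hτ, sub_self]
  have hspace : ∫ p in Icc a b ×ˢ Icc s t, (A p.1 p.2 + B p.1 p.2) = 0 := by
    rw [setIntegral_Icc_prod_Icc_symm hAB hab hst,
      intervalIntegral.integral_congr fun τ hτ => hflux τ (uIcc_of_le hst ▸ hτ),
      intervalIntegral.integral_zero]
  have htime : ∫ p in Icc a b ×ˢ Icc s t, B p.1 p.2 =
      (∫ x in a..b, Ψ (pdx u x t)) - ∫ x in a..b, Ψ (pdx u x s) := by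
    have hslice (τ : ℝ) : IntervalIntegrable (fun x => Ψ (pdx u x τ)) volume a b :=
      (hΨc.comp (hux.continuous.uncurry_right τ)).intervalIntegrable _ _
    rw [setIntegral_Icc_prod_Icc hB hab hst,
      ← intervalIntegral.integral_sub (hslice t) (hslice s)]
    congr 1 with x
    exact intervalIntegral.integral_eq_sub_of_hasDerivAt
      (fun τ _ => (hΨ _).comp τ (hasDerivAt_pdt_s16 (hux.differentiable one_ne_zero (x, τ))))
      ((hB.uncurry_left x).intervalIntegrable _ _)
  rw [integral_add (integrableOn_Icc_prod_Icc hA) (integrableOn_Icc_prod_Icc hB), htime] at hspace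
  linarith

end Dissipation

namespace IsGraphSol

variable {g u : ℝ → ℝ → ℝ} {T C E : ℝ}

lemma contDiff (hu : IsGraphSol g T u) : ContDiff ℝ 2 (uncurry u) :=
  contDiff_infty.1 hu.1 2

lemma pdx_boundary (hu : IsGraphSol g T u) {t : ℝ} (ht : t ∈ Icc 0 T) :
    pdx u 0 t = pdx u 1 t :=
  (hu.2.2 t ht).2

lemma pdt_boundary (hu : IsGraphSol g T u) (hT : 0 < T) {t : ℝ} (ht : t ∈ Icc 0 T) :
    pdt u 0 t = pdt u 1 t := by
  have hu₁ := hu.contDiff.differentiable two_ne_zero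
  have h₁ : HasDerivWithinAt (fun τ => u 1 τ - u 1 0 + u 0 0) (pdt u 1 t) (Icc 0 T) t :=
    (((hasDerivAt_pdt_s16 (hu₁ (1, t))).sub_const _).add_const _).hasDerivWithinAt
  have h₀ : HasDerivWithinAt (fun τ => u 0 τ) (pdt u 1 t) (Icc 0 T) t :=
    h₁.congr_of_mem (fun τ hτ => by linarith [(hu.2.2 τ hτ).1]) ht
  exact (uniqueDiffOn_Icc hT t ht).eq_deriv _
    (hasDerivAt_pdt_s16 (hu₁ (0, t))).hasDerivWithinAt h₀

lemma sq_pdt_le (hu : IsGraphSol g T u) (hg : ∀ x y, |g x y| ≤ C) {x t : ℝ}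
    (hx : x ∈ Icc 0 1) (ht : t ∈ Icc 0 T) :
    pdt u x t ^ 2 ≤ C ^ 2 * (1 + pdx u x t ^ 2) +
      2 * (1 / (1 + pdx u x t ^ 2) * pdx (pdx u) x t * pdt u x t) := by
  have hpde := hu.2.1 x hx t ht
  set h := g x (u x t) * √(1 + pdx u x t ^ 2)
  have hh : h ^ 2 ≤ C ^ 2 * (1 + pdx u x t ^ 2) := by
    rw [mul_pow, sq_sqrt (by positivity)]
    exact mul_le_mul_of_nonneg_right (sq_le_sq' (abs_le.1 (hg _ _)).1 (abs_le.1 (hg _ _)).2)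
      (by positivity)
  have hcurv : 1 / (1 + pdx u x t ^ 2) * pdx (pdx u) x t = pdt u x t - h := by
    rw [hpde]; ring
  rw [hcurv]
  linarith [sq_nonneg (pdt u x t - h)]

lemma continuous_curvature_mul_pdt (hu : IsGraphSol g T u) :
    Continuous (uncurry fun x t => 1 / (1 + pdx u x t ^ 2) * pdx (pdx u) x t * pdt u x t) := by
  have hux : ContDiff ℝ 1 (uncurry (pdx u)) := contDiff_pdx_s16 hu.contDiff
  have hweight : Continuous fun p : ℝ => 1 / (1 + p ^ 2) :=
    continuous_const.div (by fun_prop) fun p => by positivity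
  exact ((hweight.comp hux.continuous).mul (contDiff_pdx_s16 (n := 0) hux).continuous).mul
    (contDiff_pdt_s16 (n := 1) hu.contDiff).continuous

lemma two_mul_setIntegral_curvature_mul_pdt_le (hu : IsGraphSol g T u) (hT : 0 < T) :
    2 * ∫ p in Icc 0 1 ×ˢ Icc 0 T,
        1 / (1 + pdx u p.1 p.2 ^ 2) * pdx (pdx u) p.1 p.2 * pdt u p.1 p.2 ≤
      ∫ x in (0 : ℝ)..1, pdx u x 0 ^ 2 := by
  have hux : Continuous (uncurry (pdx u)) := (contDiff_pdx_s16 (n := 1) hu.contDiff).continuous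
  have hinitial := integral_slopeEnergy_le (hux.uncurry_right 0) zero_le_one
  have hfinal : 0 ≤ ∫ x in (0 : ℝ)..1, slopeEnergy (pdx u x T) :=
    intervalIntegral.integral_nonneg zero_le_one fun x _ => slopeEnergy_nonneg _
  rw [setIntegral_deriv_comp_pdx_mul_pdt hu.contDiff hasDerivAt_slopeEnergy hasDerivAt_arctan
    (continuous_const.div (by fun_prop) fun p => by positivity) zero_le_one hT.le
    (fun _ => hu.pdx_boundary) (fun _ => hu.pdt_boundary hT)]
  linarith

lemma setIntegral_sq_pdt_le (hu : IsGraphSol g T u) (hT : 0 < T) (hg : ∀ x y, |g x y| ≤ C)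
    (hE : ∀ t ∈ Icc 0 T, ∫ x in (0 : ℝ)..1, pdx u x t ^ 2 ≤ E) :
    ∫ p in Icc 0 1 ×ˢ Icc 0 T, pdt u p.1 p.2 ^ 2 ≤ T * (C ^ 2 * (1 + E)) + E := by
  have hux : Continuous (uncurry (pdx u)) := (contDiff_pdx_s16 (n := 1) hu.contDiff).continuous
  have hut : Continuous (uncurry (pdt u)) := (contDiff_pdt_s16 (n := 1) hu.contDiff).continuous
  set F : ℝ → ℝ → ℝ := fun x t => C ^ 2 * (1 + pdx u x t ^ 2)
  set D : ℝ → ℝ → ℝ := fun x t => 1 / (1 + pdx u x t ^ 2) * pdx (pdx u) x t * pdt u x t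
  have hF : Continuous (uncurry F) := continuous_const.mul (continuous_const.add (hux.pow 2))
  have hD : Continuous (uncurry D) := hu.continuous_curvature_mul_pdt
  have hFint := integrableOn_Icc_prod_Icc (a := 0) (b := 1) (c := 0) (d := T) hF
  have hDint := (integrableOn_Icc_prod_Icc (a := 0) (b := 1) (c := 0) (d := T) hD).const_mul 2
  have hforce : ∫ p in Icc 0 1 ×ˢ Icc 0 T, F p.1 p.2 ≤ (T - 0) * (C ^ 2 * (1 + E)) := by
    refine setIntegral_Icc_prod_Icc_le hF zero_le_one hT.le fun t ht => ?_
    have hslice : IntervalIntegrable (fun x => pdx u x t ^ 2) volume 0 1 :=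
      ((hux.uncurry_right t).pow 2).intervalIntegrable _ _
    rw [intervalIntegral.integral_const_mul,
      intervalIntegral.integral_add intervalIntegrable_const hslice]
    simp only [intervalIntegral.integral_const, sub_zero, one_smul]
    gcongr
    exact hE t ht
  have hdiss : 2 * ∫ p in Icc 0 1 ×ˢ Icc 0 T, D p.1 p.2 ≤ E :=
    (hu.two_mul_setIntegral_curvature_mul_pdt_le hT).trans (hE 0 ⟨le_rfl, hT.le⟩)
  calc ∫ p in Icc 0 1 ×ˢ Icc 0 T, pdt u p.1 p.2 ^ 2
      ≤ ∫ p in Icc 0 1 ×ˢ Icc 0 T, (F p.1 p.2 + 2 * D p.1 p.2) :=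
        setIntegral_mono_on (integrableOn_Icc_prod_Icc (f := fun x t => pdt u x t ^ 2)
          (by exact hut.pow 2)) (hFint.add hDint) (measurableSet_Icc.prod measurableSet_Icc)
          fun p hp => hu.sq_pdt_le hg hp.1 hp.2
    _ = (∫ p in Icc 0 1 ×ˢ Icc 0 T, F p.1 p.2) + 2 * ∫ p in Icc 0 1 ×ˢ Icc 0 T, D p.1 p.2 := by
        rw [integral_add hFint hDint, integral_const_mul 2 fun p : ℝ × ℝ => D p.1 p.2]
    _ ≤ T * (C ^ 2 * (1 + E)) + E := by linarith

end IsGraphSol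

section Holder

section OneVariable

variable {f f' : ℝ → ℝ} {a b E x y : ℝ}

lemma abs_sub_le_sqrt_mul_rpow (hf : ∀ x, HasDerivAt f (f' x) x) (hf' : Continuous f')
    (hE : ∫ z in a..b, f' z ^ 2 ≤ E) (hx : x ∈ Icc a b) (hy : y ∈ Icc a b) :
    |f x - f y| ≤ √E * |x - y| ^ ((1 : ℝ) / 2) := by
  wlog hyx : y ≤ x generalizing x y
  · rw [abs_sub_comm, abs_sub_comm x]
    exact this hy hx (le_of_not_ge hyx)
  rw [abs_of_nonneg (sub_nonneg.2 hyx), ← sqrt_eq_rpow, ← sqrt_mul' _ (sub_nonneg.2 hyx)]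
  refine abs_le_sqrt ?_
  calc (f x - f y) ^ 2 ≤ (x - y) * ∫ z in y..x, f' z ^ 2 := sq_sub_le_integral_deriv_sq hf hf' hyx
    _ ≤ (x - y) * ∫ z in a..b, f' z ^ 2 := by
        refine mul_le_mul_of_nonneg_left ?_ (sub_nonneg.2 hyx)
        exact intervalIntegral.integral_mono_interval hy.1 hyx hx.2
          (Eventually.of_forall fun z => sq_nonneg _) ((hf'.pow 2).intervalIntegrable _ _)
    _ ≤ E * (x - y) := by
        rw [mul_comm]
        exact mul_le_mul_of_nonneg_right hE (sub_nonneg.2 hyx)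

lemma abs_le_sqrt_mul_rpow_of_integral_sq_le (hf : ∀ x, HasDerivAt f (f' x) x)
    (hf' : Continuous f') (hab : a < b) {h H M : ℝ} (hh : 0 ≤ h) (hhH : h ≤ H) (hM : 0 ≤ M)
    (hfM : ∫ y in a..b, f y ^ 2 ≤ h * M) (hE : ∫ y in a..b, f' y ^ 2 ≤ E) (hx : x ∈ Icc a b) :
    |f x| ≤ √((b - a)⁻¹ * M * √H + 2 * √(M * E)) * h ^ ((1 : ℝ) / 4) := by
  have hinv : 0 ≤ (b - a)⁻¹ := inv_nonneg.2 (sub_nonneg.2 hab.le)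
  have hroot : h ^ ((1 : ℝ) / 4) = √√h := by
    rw [sqrt_eq_rpow, sqrt_eq_rpow, ← rpow_mul hh]
    norm_num
  rw [hroot, ← sqrt_mul' _ (sqrt_nonneg _)]
  refine abs_le_sqrt ((sq_le_integral_sq_add_sqrt hf hf' hab hx).trans ?_)
  calc (b - a)⁻¹ * (∫ y in a..b, f y ^ 2) +
        2 * √((∫ y in a..b, f y ^ 2) * ∫ y in a..b, f' y ^ 2)
      ≤ (b - a)⁻¹ * (h * M) + 2 * √(h * M * E) := by
        refine add_le_add (mul_le_mul_of_nonneg_left hfM hinv) ?_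
        gcongr
        exact intervalIntegral.integral_nonneg hab.le fun y _ => sq_nonneg _
    _ = ((b - a)⁻¹ * M * √h + 2 * √(M * E)) * √h := by
        rw [mul_assoc h M E, sqrt_mul hh]
        linear_combination -((b - a)⁻¹ * M) * mul_self_sqrt hh
    _ ≤ ((b - a)⁻¹ * M * √H + 2 * √(M * E)) * √h := by gcongr

end OneVariable

variable {u : ℝ → ℝ → ℝ} {a b c d : ℝ}

lemma integral_sq_sub_le_mul_setIntegral_sq_pdt (hu : ContDiff ℝ 1 (uncurry u)) (hab : a ≤ b)
    {s t : ℝ} (hst : s ≤ t) (hs : s ∈ Icc c d) (ht : t ∈ Icc c d) :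
    ∫ x in a..b, (u x t - u x s) ^ 2 ≤
      (t - s) * ∫ p in Icc a b ×ˢ Icc c d, pdt u p.1 p.2 ^ 2 := by
  have hut : Continuous (uncurry (pdt u)) := (contDiff_pdt_s16 (n := 0) hu).continuous
  have hut2 : Continuous (uncurry fun x τ => pdt u x τ ^ 2) := by exact hut.pow 2
  have hslice (τ : ℝ) : Continuous fun x => u x τ := hu.continuous.uncurry_right τ
  have hinner : Continuous fun x => ∫ τ in s..t, pdt u x τ ^ 2 :=
    intervalIntegral.continuous_parametric_intervalIntegral_of_continuous' hut2 s t
  calc ∫ x in a..b, (u x t - u x s) ^ 2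
      ≤ ∫ x in a..b, (t - s) * ∫ τ in s..t, pdt u x τ ^ 2 :=
        intervalIntegral.integral_mono_on hab
          ((((hslice t).sub (hslice s)).pow 2).intervalIntegrable _ _)
          ((hinner.const_mul _).intervalIntegrable _ _) fun x _ =>
            sq_sub_le_integral_deriv_sq
              (fun τ => hasDerivAt_pdt_s16 (hu.differentiable one_ne_zero (x, τ)))
              (hut.uncurry_left x) hst
    _ = (t - s) * ∫ p in Icc a b ×ˢ Icc s t, pdt u p.1 p.2 ^ 2 := by
        rw [intervalIntegral.integral_const_mul, setIntegral_Icc_prod_Icc hut2 hab hst]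
    _ ≤ (t - s) * ∫ p in Icc a b ×ˢ Icc c d, pdt u p.1 p.2 ^ 2 :=
        mul_le_mul_of_nonneg_left
          (setIntegral_mono_set (integrableOn_Icc_prod_Icc hut2)
            (Eventually.of_forall fun p => sq_nonneg _)
            (prod_mono_right (Icc_subset_Icc hs.1 ht.2)).eventuallyLE) (sub_nonneg.2 hst)

lemma abs_sub_le_sqrt_mul_rpow_of_setIntegral_sq_pdt_le (hu : ContDiff ℝ 1 (uncurry u))
    (hab : a < b) {E M : ℝ} (hE : ∀ t ∈ Icc c d, ∫ x in a..b, pdx u x t ^ 2 ≤ E)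
    (hM : ∫ p in Icc a b ×ˢ Icc c d, pdt u p.1 p.2 ^ 2 ≤ M) {x s t : ℝ} (hx : x ∈ Icc a b)
    (hs : s ∈ Icc c d) (ht : t ∈ Icc c d) :
    |u x t - u x s| ≤
      √((b - a)⁻¹ * M * √(d - c) + 2 * √(M * (4 * E))) * |t - s| ^ ((1 : ℝ) / 4) := by
  wlog hst : s ≤ t generalizing s t
  · rw [abs_sub_comm, abs_sub_comm t]
    exact this ht hs (le_of_not_ge hst)
  have hux : Continuous (uncurry (pdx u)) := (contDiff_pdx_s16 (n := 0) hu).continuous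
  have hdist : ∫ y in a..b, (u y t - u y s) ^ 2 ≤ (t - s) * M :=
    (integral_sq_sub_le_mul_setIntegral_sq_pdt hu hab.le hst hs ht).trans
      (mul_le_mul_of_nonneg_left hM (sub_nonneg.2 hst))
  have hslope : ∫ y in a..b, (pdx u y t - pdx u y s) ^ 2 ≤ 4 * E := by
    linarith [integral_sub_sq_le (hux.uncurry_right t) (hux.uncurry_right s) hab.le,
      hE t ht, hE s hs]
  rw [abs_of_nonneg (sub_nonneg.2 hst)]
  exact abs_le_sqrt_mul_rpow_of_integral_sq_le
    (fun y => (hasDerivAt_pdx_s16 (hu.differentiable one_ne_zero (y, t))).sub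
      (hasDerivAt_pdx_s16 (hu.differentiable one_ne_zero (y, s))))
    ((hux.uncurry_right t).sub (hux.uncurry_right s)) hab (sub_nonneg.2 hst)
    (sub_le_sub ht.2 hs.1) ((integral_nonneg fun p => sq_nonneg _).trans hM) hdist hslope hx

end Holder

/-- Parabolic Hölder continuity on `I × J`, with exponent `1/2` in space and `1/4` in time. -/
def IsParabolicHolderOn (C : ℝ) (I J : Set ℝ) (v : ℝ → ℝ → ℝ) : Prop :=
  ∀ x ∈ I, ∀ y ∈ I, ∀ t ∈ J, ∀ s ∈ J,
    |v x t - v y s| ≤ C * (|x - y| ^ ((1 : ℝ) / 2) + |t - s| ^ ((1 : ℝ) / 4))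

namespace IsParabolicHolderOn

variable {C : ℝ} {I J : Set ℝ} {ι : Type*} {F : ι → ℝ → ℝ → ℝ}

lemma equicontinuousOn (hF : ∀ i, IsParabolicHolderOn C I J (F i)) :
    EquicontinuousOn (fun i (p : ℝ × ℝ) => F i p.1 p.2) (I ×ˢ J) := by
  rw [← equicontinuous_restrict_iff]
  intro p
  refine Metric.equicontinuousAt_of_continuity_modulus
    (fun q : I ×ˢ J => C * (|p.1.1 - q.1.1| ^ ((1 : ℝ) / 2) + |p.1.2 - q.1.2| ^ ((1 : ℝ) / 4)))
    ?_ _ (Eventually.of_forall fun q i => hF i _ p.2.1 _ q.2.1 _ p.2.2 _ q.2.2)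
  have hmod : Continuous fun q : I ×ˢ J =>
      C * (|p.1.1 - q.1.1| ^ ((1 : ℝ) / 2) + |p.1.2 - q.1.2| ^ ((1 : ℝ) / 4)) := by
    fun_prop (disch := norm_num)
  simpa using hmod.tendsto p

lemma of_tendsto {v : ℝ → ℝ → ℝ} {l : Filter ι} [l.NeBot]
    (hF : ∀ i, IsParabolicHolderOn C I J (F i))
    (hv : ∀ x ∈ I, ∀ t ∈ J, Tendsto (fun i => F i x t) l (𝓝 (v x t))) :
    IsParabolicHolderOn C I J v := fun x hx y hy t ht s hs =>
  le_of_tendsto ((hv x hx t ht).sub (hv y hy s hs)).abs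
    (Eventually.of_forall fun i => hF i x hx y hy t ht s hs)

end IsParabolicHolderOn

lemma isParabolicHolderOn_of_integral_le {u : ℝ → ℝ → ℝ} {a b c d E M : ℝ}
    (hu : ContDiff ℝ 1 (uncurry u)) (hab : a < b)
    (hE : ∀ t ∈ Icc c d, ∫ x in a..b, pdx u x t ^ 2 ≤ E)
    (hM : ∫ p in Icc a b ×ˢ Icc c d, pdt u p.1 p.2 ^ 2 ≤ M) :
    IsParabolicHolderOn (√E + √((b - a)⁻¹ * M * √(d - c) + 2 * √(M * (4 * E))))
      (Icc a b) (Icc c d) u := by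
  intro x hx y hy t ht s hs
  set A := √((b - a)⁻¹ * M * √(d - c) + 2 * √(M * (4 * E)))
  have hspace : |u x t - u y t| ≤ √E * |x - y| ^ ((1 : ℝ) / 2) :=
    abs_sub_le_sqrt_mul_rpow (fun z => hasDerivAt_pdx_s16 (hu.differentiable one_ne_zero (z, t)))
      ((contDiff_pdx_s16 (n := 0) hu).continuous.uncurry_right t) (hE t ht) hx hy
  have htime : |u y t - u y s| ≤ A * |t - s| ^ ((1 : ℝ) / 4) :=
    abs_sub_le_sqrt_mul_rpow_of_setIntegral_sq_pdt_le hu hab hE hM hy hs ht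
  have hcross : 0 ≤ √E * |t - s| ^ ((1 : ℝ) / 4) + A * |x - y| ^ ((1 : ℝ) / 2) := by positivity
  linarith [abs_sub_le (u x t) (u y t) (u y s)]

lemma exists_subseq_tendstoUniformlyOn {X Y : Type*} [TopologicalSpace X] [MetricSpace Y]
    {S : Set X} {K : Set Y} {F : ℕ → X → Y} (hS : IsCompact S) (hK : IsCompact K)
    (hFK : ∀ n, MapsTo (F n) S K) (hF : EquicontinuousOn F S) :
    ∃ φ : ℕ → ℕ, StrictMono φ ∧ ∃ v, TendstoUniformlyOn (fun k => F (φ k)) v atTop S := by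
  have : CompactSpace S := isCompact_iff_compactSpace.1 hS
  have heq : Equicontinuous (S.domRestrict ∘ F) := (equicontinuous_restrict_iff F).2 hF
  let G (n : ℕ) : BoundedContinuousFunction S Y :=
    .mkOfCompact ⟨S.domRestrict (F n), heq.continuous n⟩
  have hG : IsCompact (closure (range G)) := by
    refine BoundedContinuousFunction.arzela_ascoli K hK _ ?_ ?_
    · rintro _ p ⟨n, rfl⟩
      exact hFK n p.2
    · intro p U hU
      filter_upwards [heq p U hU] with q hq
      rintro ⟨_, n, rfl⟩
      exact hq n
  obtain ⟨w, -, φ, hφ, hw⟩ := hG.tendsto_subseq fun n => subset_closure (mem_range_self n)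
  refine ⟨φ, hφ, extend Subtype.val w (F 0), ?_⟩
  rw [tendstoUniformlyOn_iff_tendstoUniformly_comp_coe, extend_comp Subtype.val_injective]
  exact BoundedContinuousFunction.tendsto_iff_tendstoUniformly.1 hw

theorem statement16_general (T C K : ℝ) (hT : 0 < T) (g : ℕ → ℝ → ℝ → ℝ)
    (hgb : ∀ n a b, |g n a b| ≤ C) (u : ℕ → ℝ → ℝ → ℝ) (hu : ∀ n, IsGraphSol (g n) T (u n))
    (hH1 : ∀ n, ∀ t ∈ Icc (0 : ℝ) T,
      (∫ x in (0 : ℝ)..1, ((u n x t) ^ 2 + (pdx (u n) x t) ^ 2)) ≤ K ^ 2) :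
    ∃ φ : ℕ → ℕ, StrictMono φ ∧ ∃ v : ℝ → ℝ → ℝ, ∃ C' : ℝ,
      IsParabolicHolderOn C' (Icc 0 1) (Icc 0 T) v ∧
      TendstoUniformlyOn (fun k (p : ℝ × ℝ) => u (φ k) p.1 p.2) (fun p => v p.1 p.2)
        atTop (Icc 0 1 ×ˢ Icc 0 T) := by
  have hC1 (n : ℕ) : ContDiff ℝ 1 (uncurry (u n)) := (hu n).contDiff.of_le one_le_two
  have hslice (n : ℕ) (t : ℝ) : Continuous fun x => pdx (u n) x t :=
    (contDiff_pdx_s16 (n := 0) (hC1 n)).continuous.uncurry_right t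
  have hsup (n : ℕ) : MapsTo (fun p : ℝ × ℝ => u n p.1 p.2) (Icc 0 1 ×ˢ Icc 0 T)
      (Icc (-√(((1 - 0)⁻¹ + 2) * K ^ 2)) √(((1 - 0)⁻¹ + 2) * K ^ 2)) := fun p hp =>
    abs_le.1 <| abs_le_sqrt <| sq_le_of_integral_sq_add_deriv_sq_le
      (fun x => hasDerivAt_pdx_s16 ((hC1 n).differentiable one_ne_zero (x, p.2))) (hslice n p.2)
      one_pos (hH1 n p.2 hp.2) hp.1
  have hslope (n : ℕ) : ∀ t ∈ Icc 0 T, ∫ x in (0 : ℝ)..1, pdx (u n) x t ^ 2 ≤ K ^ 2 := fun t ht =>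
    (integral_sq_le_integral_sq_add_sq (hslice n t) ((hC1 n).continuous.uncurry_right t)
      zero_le_one).trans (by simpa only [add_comm] using hH1 n t ht)
  have hholder (n : ℕ) := isParabolicHolderOn_of_integral_le (hC1 n) one_pos (hslope n)
    ((hu n).setIntegral_sq_pdt_le hT (hgb n) (hslope n))
  obtain ⟨φ, hφ, v, hv⟩ := exists_subseq_tendstoUniformlyOn (isCompact_Icc.prod isCompact_Icc)
    isCompact_Icc hsup (IsParabolicHolderOn.equicontinuousOn hholder)
  exact ⟨φ, hφ, curry v, _, .of_tendsto (fun k => hholder (φ k))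
    fun x hx t ht => hv.tendsto_at (x := (x, t)) ⟨hx, ht⟩, hv⟩

end

theorem statement16 (T C K : ℝ) (hT : 0 < T) (hC : 0 < C) (hK : 0 < K)
    (u₀ : ℝ → ℝ) (hu₀ : ContDiff ℝ (⊤ : ℕ∞) u₀) (hu₀per : Function.Periodic u₀ 1)
    (g : ℕ → ℝ → ℝ → ℝ)
    (hg : ∀ n, ContDiff ℝ (⊤ : ℕ∞) (fun p : ℝ × ℝ => g n p.1 p.2))
    (hgb : ∀ n a b, |g n a b| ≤ C)
    (u : ℕ → ℝ → ℝ → ℝ) (hu : ∀ n, IsGraphSol (g n) T (u n))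
    (hinit : ∀ n, ∀ x ∈ Set.Icc (0:ℝ) 1, u n x 0 = u₀ x)
    (hH1 : ∀ n, ∀ t ∈ Set.Icc (0:ℝ) T,
      (∫ x in (0:ℝ)..1, ((u n x t) ^ 2 + (pdx (u n) x t) ^ 2)) ≤ K ^ 2) :
    ∃ φ : ℕ → ℕ, StrictMono φ ∧ ∃ v : ℝ → ℝ → ℝ, ∃ C' : ℝ,
      (∀ x ∈ Set.Icc (0:ℝ) 1, ∀ y ∈ Set.Icc (0:ℝ) 1,
        ∀ t ∈ Set.Icc (0:ℝ) T, ∀ s ∈ Set.Icc (0:ℝ) T,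
          |v x t - v y s| ≤ C' * (|x - y| ^ ((1:ℝ)/2) + |t - s| ^ ((1:ℝ)/4))) ∧
      TendstoUniformlyOn (fun k (p : ℝ × ℝ) => u (φ k) p.1 p.2) (fun p => v p.1 p.2)
        Filter.atTop (Set.Icc 0 1 ×ˢ Set.Icc 0 T) :=
  statement16_general T C K hT g hgb u hu hH1
end
end
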